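/- Let X be a complete separable ultrametric space such that every closed ball of positive diameter is the union of finitely many maximal proper closed subballs and every strictly decreasing sequence of closed balls has diameters tending to zero. Let ν be a Borel measure on X which assigns finite positive measure to every closed ball of positive diameter and to every maximal proper closed subball of such a ball, suppose X is the union of an increasing sequence of closed balls, and suppose ν(X) = A < ∞ (so A is the supremum of the measures of the closed balls). For each closed ball I of positive diameter, with pairwise disjoint maximal proper closed subballs I₁, …, I_{p_I} (p_I ≥ 2), let (ψ_{I,j})_{j=1}^{p_I−1} be an orthonormal basis of the (p_I−1)-dimensional subspace of L²(X,ν) consisting of linear combinations of the indicator functions of I₁, …, I_{p_I} with zero ν-integral. Then the family {ψ_{I,j}} together with the constant function A^{−1/2} is an orthonormal (Hilbert) basis of L²(X,ν). -/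

import Mathlib

open MeasureTheory

/-- A closed ball in a metric space: a set of the form `B̄(a,r)` with `r ≥ 0`. -/
def IsClosedBall {X : Type*} [MetricSpace X] (B : Set X) : Prop :=
  ∃ (a : X) (r : ℝ), 0 ≤ r ∧ B = Metric.closedBall a r

/-- `B'` is a maximal proper closed subball of `B`: a closed ball strictly contained
in `B` such that no closed ball is strictly between `B'` and `B`. -/
def IsMaxSubball {X : Type*} [MetricSpace X] (B' B : Set X) : Prop :=
  IsClosedBall B' ∧ B' ⊂ B ∧ ∀ B'' : Set X, IsClosedBall B'' → B' ⊂ B'' → ¬(B'' ⊂ B)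

/-!
A wavelet at `I` vanishes outside `I`, has mean zero, and is constant on every closed ball that does
not contain `I`; hence wavelets at different balls are orthogonal to each other and to constants.

For completeness let `f` be orthogonal to all wavelets and to constants. Orthogonality to the
wavelets at `I` says that the averages of `f` over `I` and over its maximal subballs agree. Passing
to maximal subballs, and to the intersection of the balls reached so far, leads from any ball down
to any smaller one of positive measure, so `f` has the same average over both. Exhausting `X` by
balls, this average is the one over `X`, that is `0`. Closed balls of positive radius form a
`π`-system generating the Borel σ-algebra, whence `f = 0`.

The `p_I - 1` given functions at `I` span the mean-zero space, whose dimension is less than `p_I`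
because `1_I` has nonzero integral.
-/

open scoped ENNReal InnerProductSpace Topology
open Filter Function Metric

/-- Every closed ball of positive diameter is the union of its maximal proper closed subballs;
there may be infinitely many of them. -/
def MaxSubballsCover (X : Type*) [MetricSpace X] : Prop :=
  ∀ B : Set X, IsClosedBall B → 0 < ediam B → B = ⋃₀ {B' : Set X | IsMaxSubball B' B}

section Balls

variable {X : Type*} [MetricSpace X] {B C D : Set X}

theorem isClosedBall_closedBall (a : X) {r : ℝ} (hr : 0 ≤ r) : IsClosedBall (closedBall a r) :=
  ⟨a, r, hr, rfl⟩

theorem IsClosedBall.nonempty (hB : IsClosedBall B) : B.Nonempty := by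
  obtain ⟨a, r, hr, rfl⟩ := hB
  exact nonempty_closedBall.2 hr

theorem IsClosedBall.measurableSet [MeasurableSpace X] [OpensMeasurableSpace X]
    (hB : IsClosedBall B) : MeasurableSet B := by
  obtain ⟨a, r, -, rfl⟩ := hB
  exact measurableSet_closedBall

theorem IsMaxSubball.isClosedBall (hC : IsMaxSubball C B) : IsClosedBall C := hC.1

theorem IsMaxSubball.ssubset (hC : IsMaxSubball C B) : C ⊂ B := hC.2.1

variable [IsUltrametricDist X]

theorem IsClosedBall.subset_trichotomy (hB : IsClosedBall B) (hC : IsClosedBall C) :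
    B ⊆ C ∨ C ⊆ B ∨ Disjoint B C := by
  obtain ⟨a, r, -, rfl⟩ := hB
  obtain ⟨b, s, -, rfl⟩ := hC
  exact IsUltrametricDist.closedBall_subset_trichotomy a b r s

theorem IsMaxSubball.disjoint (hB : IsMaxSubball B D) (hC : IsMaxSubball C D) (hne : B ≠ C) :
    Disjoint B C := by
  rcases hB.isClosedBall.subset_trichotomy hC.isClosedBall with h | h | h
  · exact (hB.2.2 C hC.isClosedBall (h.ssubset_of_ne hne) hC.ssubset).elim
  · exact (hC.2.2 B hB.isClosedBall (h.ssubset_of_ne hne.symm) hB.ssubset).elim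
  · exact h

theorem IsClosedBall.exists_isMaxSubball_superset
    (hcov : MaxSubballsCover X) (hB : IsClosedBall B) (hC : IsClosedBall C) (hCB : C ⊂ B) :
    ∃ B', IsMaxSubball B' B ∧ C ⊆ B' := by
  obtain ⟨c, hc⟩ := hC.nonempty
  obtain ⟨y, hyB, hyC⟩ := Set.exists_of_ssubset hCB
  have hpos : 0 < ediam B :=
    ediam_pos_iff.2 ⟨c, hCB.subset hc, y, hyB, ne_of_mem_of_not_mem hc hyC⟩
  obtain ⟨B', hB', hcB'⟩ : c ∈ ⋃₀ {B' : Set X | IsMaxSubball B' B} :=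
    hcov B hB hpos ▸ hCB.subset hc
  refine ⟨B', hB', ?_⟩
  rcases hC.subset_trichotomy hB'.isClosedBall with h | h | h
  · exact h
  · by_contra hn
    exact hB'.2.2 C hC ⟨h, hn⟩ hCB
  · exact (Set.disjoint_left.1 h hc hcB').elim

theorem IsClosedBall.exists_eq_closedBall_of_superset (hB : IsClosedBall B) {c : X} {s : ℝ}
    (hs : 0 ≤ s) (hsub : closedBall c s ⊆ B) : ∃ t, s ≤ t ∧ B = closedBall c t := by
  obtain ⟨b, t, -, rfl⟩ := hB
  have hbc : closedBall b t = closedBall c t :=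
    IsUltrametricDist.closedBall_eq_of_mem (hsub (mem_closedBall_self hs))
  rw [hbc] at hsub ⊢
  rcases le_total s t with hst | hts
  · exact ⟨t, hst, rfl⟩
  · exact ⟨s, le_rfl, (closedBall_subset_closedBall hts).antisymm hsub⟩

theorem iInter_closedBall_of_tendsto {Y : Type*} [PseudoMetricSpace Y] (c : Y) {u : ℕ → ℝ} {t : ℝ}
    (hu : Antitone u) (hlim : Tendsto u atTop (𝓝 t)) :
    ⋂ n, closedBall c (u n) = closedBall c t := by
  ext x
  simp only [Set.mem_iInter, mem_closedBall]
  exact ⟨ge_of_tendsto' hlim, fun hx n => hx.trans (hu.le_of_tendsto hlim n)⟩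

-- Among the balls `closedBall c t` with `C ⊆ closedBall c t ⊆ D` satisfying `P`, the one whose
-- radius is the infimum again satisfies `P`, and it has no room for a subball containing `C`.
theorem IsClosedBall.descent_induction
    (hcov : MaxSubballsCover X) (hC : IsClosedBall C) (hD : IsClosedBall D) (hCD : C ⊆ D)
    {P : Set X → Prop} (top : P D)
    (subball : ∀ B B', IsClosedBall B → IsMaxSubball B' B → C ⊆ B' → P B → P B')
    (iInter : ∀ B : ℕ → Set X, (∀ n, IsClosedBall (B n)) → (∀ n, C ⊆ B n) → Antitone B →
      (∀ n, P (B n)) → P (⋂ n, B n)) : P C := by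
  obtain ⟨c, s, hs, rfl⟩ := hC
  let T := {t | s ≤ t ∧ P (closedBall c t)}
  have hTbdd : BddBelow T := ⟨s, fun t ht => ht.1⟩
  obtain ⟨R, hsR, rfl⟩ := hD.exists_eq_closedBall_of_superset hs hCD
  obtain ⟨u, hu_anti, hu_lim, hu_mem⟩ := exists_seq_tendsto_sInf (S := T) ⟨R, hsR, top⟩ hTbdd
  have hs_inf : s ≤ sInf T := ge_of_tendsto' hu_lim fun n => (hu_mem n).1
  have hP_inf : P (closedBall c (sInf T)) := by
    rw [← iInter_closedBall_of_tendsto c hu_anti hu_lim]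
    exact iInter _ (fun n => isClosedBall_closedBall c (hs.trans (hu_mem n).1))
      (fun n => closedBall_subset_closedBall (hu_mem n).1)
      (fun m n hmn => closedBall_subset_closedBall (hu_anti hmn)) fun n => (hu_mem n).2
  by_cases heq : closedBall c s = closedBall c (sInf T)
  · rwa [heq]
  have hball := isClosedBall_closedBall c (hs.trans hs_inf)
  obtain ⟨B', hB', hsB'⟩ := hball.exists_isMaxSubball_superset hcov (isClosedBall_closedBall c hs)
    ((closedBall_subset_closedBall hs_inf).ssubset_of_ne heq)
  obtain ⟨t, hst, rfl⟩ := hB'.isClosedBall.exists_eq_closedBall_of_superset hs hsB'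
  have ht : t ∈ T := ⟨hst, subball _ _ hball hB' hsB' hP_inf⟩
  exact absurd (closedBall_subset_closedBall (csInf_le hTbdd ht)) hB'.ssubset.not_subset

theorem isTopologicalBasis_closedBall (X : Type*) [PseudoMetricSpace X] [IsUltrametricDist X] :
    TopologicalSpace.IsTopologicalBasis {B : Set X | ∃ a r, 0 < r ∧ B = closedBall a r} := by
  refine TopologicalSpace.isTopologicalBasis_of_isOpen_of_nhds ?_ fun a U ha hU => ?_
  · rintro _ ⟨a, r, hr, rfl⟩
    exact IsUltrametricDist.isOpen_closedBall a hr.ne'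
  · obtain ⟨r, hr, hrU⟩ := nhds_basis_closedBall.mem_iff.1 (hU.mem_nhds ha)
    exact ⟨_, ⟨a, r, hr, rfl⟩, mem_closedBall_self hr.le, hrU⟩

theorem isPiSystem_closedBall (X : Type*) [PseudoMetricSpace X] [IsUltrametricDist X] :
    IsPiSystem {B : Set X | ∃ a r, 0 < r ∧ B = closedBall a r} := by
  rintro _ ⟨a, r, hr, rfl⟩ _ ⟨b, s, hs, rfl⟩ hne
  rcases IsUltrametricDist.closedBall_subset_trichotomy a b r s with h | h | h
  · exact ⟨a, r, hr, Set.inter_eq_left.2 h⟩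
  · exact ⟨b, s, hs, Set.inter_eq_right.2 h⟩
  · exact absurd h.inter_eq hne.ne_empty

end Balls

section Averages

variable {X E : Type*} [NormedAddCommGroup E] [NormedSpace ℝ E] [MeasurableSpace X]
  {ν : Measure X} {f g : X → E}

section Limits

variable [IsFiniteMeasure ν] {s : ℕ → Set X}

theorem tendsto_setAverage_of_antitone (hs : ∀ n, MeasurableSet (s n)) (hanti : Antitone s)
    (hf : Integrable f ν) (hν : ν (⋂ n, s n) ≠ 0) :
    Tendsto (fun n => ⨍ x in s n, f x ∂ν) atTop (𝓝 (⨍ x in ⋂ n, s n, f x ∂ν)) := by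
  have hmeas : Tendsto (fun n => ν.real (s n)) atTop (𝓝 (ν.real (⋂ n, s n))) :=
    (ENNReal.tendsto_toReal (measure_ne_top ν _)).comp <| tendsto_measure_iInter_atTop
      (fun n => (hs n).nullMeasurableSet) hanti ⟨0, measure_ne_top ν _⟩
  simp only [setAverage_eq]
  exact (hmeas.inv₀ ((measureReal_ne_zero_iff (measure_ne_top ν _)).2 hν)).smul
    (tendsto_setIntegral_of_antitone hs hanti ⟨0, hf.integrableOn⟩)

theorem tendsto_setAverage_of_monotone (hs : ∀ n, MeasurableSet (s n)) (hmono : Monotone s)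
    (hf : Integrable f ν) (hν : ν (⋃ n, s n) ≠ 0) :
    Tendsto (fun n => ⨍ x in s n, f x ∂ν) atTop (𝓝 (⨍ x in ⋃ n, s n, f x ∂ν)) := by
  have hmeas : Tendsto (fun n => ν.real (s n)) atTop (𝓝 (ν.real (⋃ n, s n))) :=
    (ENNReal.tendsto_toReal (measure_ne_top ν _)).comp (tendsto_measure_iUnion_atTop hmono)
  simp only [setAverage_eq]
  exact (hmeas.inv₀ ((measureReal_ne_zero_iff (measure_ne_top ν _)).2 hν)).smul
    (tendsto_setIntegral_of_monotone hs hmono hf.integrableOn)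

end Limits

theorem ae_eq_of_forall_setIntegral_closedBall_eq [PseudoMetricSpace X]
    [BorelSpace X] [IsUltrametricDist X] [TopologicalSpace.SeparableSpace X] [CompleteSpace E]
    (hf : Integrable f ν) (hg : Integrable g ν)
    (h : ∀ a r, 0 < r → ∫ x in closedBall a r, f x ∂ν = ∫ x in closedBall a r, g x ∂ν) :
    f =ᵐ[ν] g := by
  have := UniformSpace.secondCountable_of_separable X
  have htotal : ∫ x, f x ∂ν = ∫ x, g x ∂ν := by
    rcases isEmpty_or_nonempty X with hX | ⟨⟨a⟩⟩
    · simp [Measure.eq_zero_of_isEmpty]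
    have hmono : Monotone fun n : ℕ => closedBall a (n + 1 : ℝ) := fun m n hmn =>
      closedBall_subset_closedBall (by gcongr)
    have huniv : ⋃ n : ℕ, closedBall a (n + 1 : ℝ) = Set.univ :=
      Set.eq_univ_of_subset (Set.iUnion_mono fun n =>
        closedBall_subset_closedBall (le_add_of_nonneg_right zero_le_one))
        (iUnion_closedBall_nat a)
    have hlim {k : X → E} (hk : Integrable k ν) := huniv ▸ tendsto_setIntegral_of_monotone
      (fun n => measurableSet_closedBall) hmono hk.integrableOn
    simpa only [setIntegral_univ] using tendsto_nhds_unique_of_eventuallyEq (hlim hf) (hlim hg)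
      (.of_forall fun n => h a _ n.cast_add_one_pos)
  refine hf.ae_eq_of_withDensityᵥ_eq hg <| VectorMeasure.ext_of_generateFrom
    {B | ∃ a r, 0 < r ∧ B = closedBall a r} ?_
    (BorelSpace.measurable_eq.trans (isTopologicalBasis_closedBall X).borel_eq_generateFrom)
    (isPiSystem_closedBall X) ?_
  · rintro _ ⟨a, r, hr, rfl⟩
    simpa only [withDensityᵥ_apply, hf, hg, measurableSet_closedBall] using h a r hr
  · simpa only [withDensityᵥ_apply, hf, hg, MeasurableSet.univ, setIntegral_univ] using htotal

variable [MetricSpace X] [BorelSpace X] [IsUltrametricDist X] [IsFiniteMeasure ν]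

theorem setAverage_eq_of_forall_isMaxSubball
    (hcov : MaxSubballsCover X) (hf : Integrable f ν)
    (hstep : ∀ B B', IsClosedBall B → IsMaxSubball B' B → ν B' ≠ 0 →
      ⨍ x in B', f x ∂ν = ⨍ x in B, f x ∂ν)
    {C D : Set X} (hC : IsClosedBall C) (hD : IsClosedBall D) (hCD : C ⊆ D) (hνC : ν C ≠ 0) :
    ⨍ x in C, f x ∂ν = ⨍ x in D, f x ∂ν := by
  have measure_ne_zero {B : Set X} (hCB : C ⊆ B) : ν B ≠ 0 := fun h =>
    hνC (measure_mono_null hCB h)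
  refine hC.descent_induction hcov hD hCD (P := fun B => ⨍ x in B, f x ∂ν = ⨍ x in D, f x ∂ν)
    rfl ?_ ?_
  · exact fun B B' hB hB' hCB' h => (hstep B B' hB hB' (measure_ne_zero hCB')).trans h
  · intro B hB hCB hanti h
    have hlim := tendsto_setAverage_of_antitone (fun n => (hB n).measurableSet) hanti hf
      (measure_ne_zero (Set.subset_iInter hCB))
    exact tendsto_nhds_unique (hlim.congr h) tendsto_const_nhds

theorem setAverage_eq_average_of_forall_isMaxSubball
    (hcov : MaxSubballsCover X) (hf : Integrable f ν)
    (hstep : ∀ B B', IsClosedBall B → IsMaxSubball B' B → ν B' ≠ 0 →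
      ⨍ x in B', f x ∂ν = ⨍ x in B, f x ∂ν)
    {C : Set X} (hC : IsClosedBall C) (hνC : ν C ≠ 0) :
    ⨍ x in C, f x ∂ν = ⨍ x, f x ∂ν := by
  obtain ⟨c, s, -, hCs⟩ := id hC
  have hmono : Monotone fun n : ℕ => closedBall c (n : ℝ) := fun m n hmn =>
    closedBall_subset_closedBall (Nat.cast_le.2 hmn)
  have huniv := iUnion_closedBall_nat c
  have hlim := tendsto_setAverage_of_monotone (fun n => measurableSet_closedBall) hmono hf
    (huniv ▸ fun h => hνC (measure_mono_null (Set.subset_univ C) h))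
  rw [huniv, Measure.restrict_univ] at hlim
  refine tendsto_nhds_unique (tendsto_const_nhds.congr' ?_) hlim
  filter_upwards [eventually_ge_atTop ⌈s⌉₊] with n hn
  exact setAverage_eq_of_forall_isMaxSubball hcov hf hstep hC
    (isClosedBall_closedBall c n.cast_nonneg)
    (hCs ▸ closedBall_subset_closedBall (Nat.ceil_le.1 hn)) hνC

theorem ae_eq_average_of_forall_isMaxSubball [CompleteSpace E] [TopologicalSpace.SeparableSpace X]
    (hcov : MaxSubballsCover X) (hf : Integrable f ν)
    (hstep : ∀ B B', IsClosedBall B → IsMaxSubball B' B → ν B' ≠ 0 →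
      ⨍ x in B', f x ∂ν = ⨍ x in B, f x ∂ν) :
    f =ᵐ[ν] fun _ => ⨍ x, f x ∂ν := by
  refine ae_eq_of_forall_setIntegral_closedBall_eq hf (integrable_const _) fun a r hr => ?_
  rcases eq_or_ne (ν (closedBall a r)) 0 with h0 | h0
  · rw [setIntegral_measure_zero f h0, setIntegral_measure_zero _ h0]
  · rw [setIntegral_const, ← setAverage_eq_average_of_forall_isMaxSubball hcov hf hstep
      (isClosedBall_closedBall a hr.le) h0, measure_smul_setAverage f (measure_ne_top ν _)]

end Averages

theorem mem_span_indicatorConstLp {α 𝕜 ι : Type*} [NormedField 𝕜] [MeasurableSpace α]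
    {μ : Measure α} {p : ℝ≥0∞} [Finite ι] {s : ι → Set α} (hs : ∀ i, MeasurableSet (s i))
    (hμs : ∀ i, μ (s i) ≠ ∞) (hdisj : Pairwise (Disjoint on s)) {g : α → 𝕜}
    (hg0 : ∀ x ∉ ⋃ i, s i, g x = 0) (hg : ∀ i, ∀ x ∈ s i, ∀ y ∈ s i, g x = g y)
    {h : Lp 𝕜 p μ} (hhg : h =ᵐ[μ] g) :
    h ∈ Submodule.span 𝕜 (Set.range fun i => indicatorConstLp p (hs i) (hμs i) (1 : 𝕜)) := by
  have := Fintype.ofFinite ι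
  have hconst (i : ι) : ∃ c, ∀ x ∈ s i, g x = c := by
    rcases (s i).eq_empty_or_nonempty with hi | ⟨y, hy⟩
    · exact ⟨0, by simp [hi]⟩
    · exact ⟨g y, fun x hx => hg i x hx y hy⟩
  choose c hc using hconst
  have hg_sum (x : α) : g x = ∑ i, c i • (s i).indicator (fun _ => (1 : 𝕜)) x := by
    have hsupp : (⋃ i ∈ Finset.univ, s i).indicator g = g :=
      Set.indicator_eq_self.2 fun x hx => by simpa using mt (hg0 x) hx
    rw [← hsupp, Finset.indicator_biUnion _ _ (hdisj.set_pairwise _)]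
    refine Finset.sum_congr rfl fun i _ => ?_
    by_cases hx : x ∈ s i <;> simp [hx, hc i x]
  have hh_sum : h = ∑ i, c i • indicatorConstLp p (hs i) (hμs i) (1 : 𝕜) := by
    refine Lp.ext ?_
    filter_upwards [hhg, Lp.coeFn_finsetSum Finset.univ fun i =>
        c i • indicatorConstLp p (hs i) (hμs i) (1 : 𝕜),
      ae_all_iff.2 fun i => Lp.coeFn_smul (c i) (indicatorConstLp p (hs i) (hμs i) (1 : 𝕜)),
      ae_all_iff.2 fun i => indicatorConstLp_coeFn (p := p) (hs := hs i) (hμs := hμs i)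
        (c := (1 : 𝕜))] with x hxg hxsum hxsmul hxind
    simp only [hxg, hg_sum, hxsum, Finset.sum_apply, hxsmul, Pi.smul_apply, hxind]
  rw [hh_sum]
  exact sum_mem fun i _ => Submodule.smul_mem _ _ (Submodule.subset_span ⟨i, rfl⟩)

theorem inner_const_one_indicatorConstLp_one {𝕜 α : Type*} [RCLike 𝕜] [MeasurableSpace α]
    {μ : Measure α} [IsFiniteMeasure μ] {s : Set α} (hs : MeasurableSet s) :
    ⟪Lp.const 2 μ (1 : 𝕜), indicatorConstLp 2 hs (measure_ne_top μ s) (1 : 𝕜)⟫_𝕜 = μ.real s := by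
  rw [← indicatorConstLp_univ, L2.inner_indicatorConstLp_one_indicatorConstLp_one, Set.univ_inter]

theorem orthonormal_option_elim {𝕜 E ι : Type*} [RCLike 𝕜] [SeminormedAddCommGroup E]
    [InnerProductSpace 𝕜 E] {e : E} {v : ι → E} (he : ‖e‖ = 1) (hv : Orthonormal 𝕜 v)
    (hev : ∀ i, ⟪e, v i⟫_𝕜 = 0) : Orthonormal 𝕜 (fun o : Option ι => o.elim e v) := by
  refine ⟨Option.rec he hv.1, ?_⟩
  rintro (_ | i) (_ | j) hij
  · exact (hij rfl).elim
  · exact hev j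
  · exact inner_eq_zero_symm.1 (hev i)
  · exact hv.2 (ne_of_apply_ne some hij)

section WaveletSpace

variable (𝕜 : Type*) {X : Type*} [RCLike 𝕜] [MetricSpace X] [MeasurableSpace X] (ν : Measure X)

/-- The `L²` functions supported on `B` and constant on each maximal proper closed subball of `B`,
up to null sets. If `B` is the union of finitely many maximal proper closed subballs `I₁, …, I_p`,
these are the linear combinations of the indicator functions of `I₁, …, I_p`. -/
def subballSpace (B : Set X) : Submodule 𝕜 (Lp 𝕜 2 ν) where
  carrier := {h | ∃ g : X → 𝕜, (∀ x ∉ B, g x = 0) ∧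
    (∀ B', IsMaxSubball B' B → ∀ x ∈ B', ∀ y ∈ B', g x = g y) ∧ h =ᵐ[ν] g}
  zero_mem' := ⟨0, fun _ _ => rfl, fun _ _ _ _ _ _ => rfl, Lp.coeFn_zero 𝕜 2 ν⟩
  add_mem' := by
    rintro h k ⟨g, hg0, hg, hhg⟩ ⟨u, hu0, hu, hku⟩
    exact ⟨g + u, fun x hx => by simp [hg0 x hx, hu0 x hx],
      fun B' hB' x hx y hy => congrArg₂ (· + ·) (hg B' hB' x hx y hy) (hu B' hB' x hx y hy),
      (Lp.coeFn_add h k).trans (hhg.add hku)⟩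
  smul_mem' := by
    rintro c h ⟨g, hg0, hg, hhg⟩
    exact ⟨c • g, fun x hx => by simp [hg0 x hx],
      fun B' hB' x hx y hy => congrArg (c • ·) (hg B' hB' x hx y hy),
      (Lp.coeFn_smul c h).trans (hhg.const_smul c)⟩

variable [IsFiniteMeasure ν]

/-- The space of ultrametric wavelets at `B`: the functions in `subballSpace 𝕜 ν B` with zero
`ν`-integral, encoded as orthogonality to the constant function `1`. -/
noncomputable def waveletSpace (B : Set X) : Submodule 𝕜 (Lp 𝕜 2 ν) :=
  subballSpace 𝕜 ν B ⊓ (𝕜 ∙ Lp.const 2 ν (1 : 𝕜))ᗮ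

variable {𝕜 ν} {B C : Set X} {f h : Lp 𝕜 2 ν}

theorem mem_waveletSpace_iff_integral :
    h ∈ waveletSpace 𝕜 ν B ↔ h ∈ subballSpace 𝕜 ν B ∧ ∫ x, h x ∂ν = 0 := by
  rw [waveletSpace, Submodule.mem_inf, Submodule.mem_orthogonal_singleton_iff_inner_right,
    ← indicatorConstLp_univ, L2.inner_indicatorConstLp_one, setIntegral_univ]

theorem mem_waveletSpace_iff :
    h ∈ waveletSpace 𝕜 ν B ↔ ∃ g : X → 𝕜, (∀ x ∉ B, g x = 0) ∧
      (∀ B', IsMaxSubball B' B → ∀ x ∈ B', ∀ y ∈ B', g x = g y) ∧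
      ∫ x, g x ∂ν = 0 ∧ h =ᵐ[ν] g := by
  rw [mem_waveletSpace_iff_integral]
  constructor
  · rintro ⟨⟨g, hg0, hg, hhg⟩, hint⟩
    exact ⟨g, hg0, hg, (integral_congr_ae hhg).symm.trans hint, hhg⟩
  · rintro ⟨g, hg0, hg, hint, hhg⟩
    exact ⟨⟨g, hg0, hg, hhg⟩, (integral_congr_ae hhg).trans hint⟩

theorem inner_eq_zero_of_mem_waveletSpace {u : X → 𝕜} (hu : ∀ x ∈ C, ∀ y ∈ C, u x = u y)
    (hfu : f =ᵐ[ν] u) (hh : h ∈ waveletSpace 𝕜 ν C) : ⟪f, h⟫_𝕜 = 0 := by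
  obtain ⟨g, hg0, -, hint, hhg⟩ := mem_waveletSpace_iff.1 hh
  obtain ⟨c, hc⟩ : ∃ c, ∀ x, ⟪u x, g x⟫_𝕜 = ⟪c, g x⟫_𝕜 := by
    rcases C.eq_empty_or_nonempty with rfl | ⟨y, hy⟩
    · exact ⟨0, fun x => by simp [hg0 x]⟩
    · refine ⟨u y, fun x => ?_⟩
      by_cases hx : x ∈ C
      · rw [hu x hx y hy]
      · simp [hg0 x hx]
  calc ⟪f, h⟫_𝕜 = ∫ x, ⟪c, g x⟫_𝕜 ∂ν := by
        rw [L2.inner_def]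
        refine integral_congr_ae ?_
        filter_upwards [hfu, hhg] with x hxu hxg
        rw [hxu, hxg, hc]
    _ = 0 := by simp only [RCLike.inner_apply, integral_mul_const, hint, zero_mul]

theorem subballSpace_isOrtho_waveletSpace [IsUltrametricDist X] (hcov : MaxSubballsCover X)
    (hB : IsClosedBall B) (hC : IsClosedBall C) (hBC : ¬B ⊆ C) :
    subballSpace 𝕜 ν B ⟂ waveletSpace 𝕜 ν C := by
  rw [Submodule.isOrtho_iff_inner_eq]
  rintro f ⟨u, hu0, hu, hfu⟩ h hh
  refine inner_eq_zero_of_mem_waveletSpace ?_ hfu hh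
  rcases hB.subset_trichotomy hC with hsub | hsub | hdisj
  · exact (hBC hsub).elim
  · obtain ⟨B', hB', hCB'⟩ := hB.exists_isMaxSubball_superset hcov hC ⟨hsub, hBC⟩
    exact fun x hx y hy => hu B' hB' x (hCB' hx) y (hCB' hy)
  · intro x hx y hy
    rw [hu0 x (Set.disjoint_right.1 hdisj hx), hu0 y (Set.disjoint_right.1 hdisj hy)]

theorem waveletSpace_isOrtho [IsUltrametricDist X] (hcov : MaxSubballsCover X) (hB : IsClosedBall B)
    (hC : IsClosedBall C) (hne : B ≠ C) : waveletSpace 𝕜 ν B ⟂ waveletSpace 𝕜 ν C := by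
  by_cases hBC : B ⊆ C
  · exact ((subballSpace_isOrtho_waveletSpace hcov hC hB
      fun hCB => hne (hBC.antisymm hCB)).mono_left inf_le_left).symm
  · exact (subballSpace_isOrtho_waveletSpace hcov hB hC hBC).mono_left inf_le_left

theorem indicatorConstLp_mem_subballSpace {s : Set X} (hs : MeasurableSet s) (hsB : s ⊆ B)
    (h : ∀ B', IsMaxSubball B' B → B' ⊆ s ∨ Disjoint B' s) (c : 𝕜) :
    indicatorConstLp 2 hs (measure_ne_top ν s) c ∈ subballSpace 𝕜 ν B := by
  refine ⟨s.indicator fun _ => c, fun x hx => Set.indicator_of_notMem (mt (@hsB x) hx) _,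
    fun B' hB' x hx y hy => ?_, indicatorConstLp_coeFn⟩
  rcases h B' hB' with hsub | hdisj
  · rw [Set.indicator_of_mem (hsub hx), Set.indicator_of_mem (hsub hy)]
  · rw [Set.indicator_of_notMem (Set.disjoint_left.1 hdisj hx),
      Set.indicator_of_notMem (Set.disjoint_left.1 hdisj hy)]

variable [BorelSpace X]

theorem indicatorConstLp_self_mem_subballSpace (hB : IsClosedBall B) (c : 𝕜) :
    indicatorConstLp 2 hB.measurableSet (measure_ne_top ν B) c ∈ subballSpace 𝕜 ν B :=
  indicatorConstLp_mem_subballSpace hB.measurableSet subset_rfl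
    (fun _ hB' => .inl hB'.ssubset.subset) c

theorem waveletSpace_lt_subballSpace (hB : IsClosedBall B) (hνB : ν B ≠ 0) :
    waveletSpace 𝕜 ν B < subballSpace 𝕜 ν B := by
  refine lt_of_le_not_ge inf_le_left fun hle => ?_
  have horth := Submodule.mem_orthogonal_singleton_iff_inner_right.1
    (hle (indicatorConstLp_self_mem_subballSpace hB (1 : 𝕜))).2
  rw [inner_const_one_indicatorConstLp_one, RCLike.ofReal_eq_zero] at horth
  exact hνB ((measureReal_eq_zero_iff (measure_ne_top ν B)).1 horth)

variable [IsUltrametricDist X]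

theorem subballSpace_le_span [Finite {B' : Set X | IsMaxSubball B' B}]
    (hB : B = ⋃₀ {B' : Set X | IsMaxSubball B' B}) :
    subballSpace 𝕜 ν B ≤ Submodule.span 𝕜 (Set.range fun B' : {B' : Set X | IsMaxSubball B' B} =>
      indicatorConstLp 2 B'.2.isClosedBall.measurableSet (measure_ne_top ν B'.1) (1 : 𝕜)) := by
  rintro h ⟨g, hg0, hg, hhg⟩
  refine mem_span_indicatorConstLp (s := Subtype.val) _ _
    (fun B' C' hne => B'.2.disjoint C'.2 (Subtype.coe_ne_coe.2 hne)) ?_ (fun B' => hg B' B'.2) hhg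
  rwa [← Set.sUnion_eq_iUnion, ← hB]

theorem finiteDimensional_subballSpace [Finite {B' : Set X | IsMaxSubball B' B}]
    (hB : B = ⋃₀ {B' : Set X | IsMaxSubball B' B}) :
    FiniteDimensional 𝕜 (subballSpace 𝕜 ν B) :=
  @Submodule.finiteDimensional_of_le _ _ _ _ _ _ _
    (FiniteDimensional.span_of_finite 𝕜 (Set.finite_range _)) (subballSpace_le_span hB)

theorem finrank_subballSpace_le [Finite {B' : Set X | IsMaxSubball B' B}]
    (hB : B = ⋃₀ {B' : Set X | IsMaxSubball B' B}) :
    Module.finrank 𝕜 (subballSpace 𝕜 ν B) ≤ Nat.card {B' : Set X | IsMaxSubball B' B} := by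
  have := Fintype.ofFinite {B' : Set X | IsMaxSubball B' B}
  rw [Nat.card_eq_fintype_card]
  exact (@Submodule.finrank_mono _ _ _ _ _ _ _ _
    (FiniteDimensional.span_of_finite 𝕜 (Set.finite_range _)) (subballSpace_le_span hB)).trans
    (finrank_range_le_card _)

theorem topologicalClosure_span_eq_waveletSpace {ι : Type*} [Fintype ι]
    [Finite {B' : Set X | IsMaxSubball B' B}] (hB : IsClosedBall B)
    (hcov : B = ⋃₀ {B' : Set X | IsMaxSubball B' B}) (hνB : ν B ≠ 0)
    (hcard : Nat.card {B' : Set X | IsMaxSubball B' B} ≤ Fintype.card ι + 1) {φ : ι → Lp 𝕜 2 ν}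
    (hφ : Orthonormal 𝕜 φ) (hmem : ∀ i, φ i ∈ waveletSpace 𝕜 ν B) :
    (Submodule.span 𝕜 (Set.range φ)).topologicalClosure = waveletSpace 𝕜 ν B := by
  have := finiteDimensional_subballSpace (𝕜 := 𝕜) (ν := ν) hcov
  have hlt := waveletSpace_lt_subballSpace (𝕜 := 𝕜) hB hνB
  have := Submodule.finiteDimensional_of_le hlt.le
  have hrank : Module.finrank 𝕜 (waveletSpace 𝕜 ν B) ≤ Fintype.card ι :=
    Nat.lt_succ_iff.1 ((Submodule.finrank_lt_finrank_of_lt hlt).trans_le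
      ((finrank_subballSpace_le hcov).trans hcard))
  have hspan : Submodule.span 𝕜 (Set.range φ) = waveletSpace 𝕜 ν B :=
    Submodule.eq_of_le_of_finrank_le (Submodule.span_le.2 (Set.range_subset_iff.2 hmem))
      (by rwa [finrank_span_eq_card hφ.linearIndependent])
  rw [hspan, (Submodule.closed_of_finiteDimensional _).submodule_topologicalClosure_eq]

-- `f` is orthogonal to the wavelet `1_{B'} / ν(B') - 1_B / ν(B)`.
theorem setAverage_eq_of_mem_orthogonal_waveletSpace {B' : Set X} (hB : IsClosedBall B)
    (hB' : IsMaxSubball B' B) (hν : ν B' ≠ 0) (hf : f ∈ (waveletSpace 𝕜 ν B)ᗮ) :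
    ⨍ x in B', f x ∂ν = ⨍ x in B, f x ∂ν := by
  have hmeas' := hB'.isClosedBall.measurableSet
  have hreal' : (ν.real B' : 𝕜) ≠ 0 := by
    exact_mod_cast (measureReal_ne_zero_iff (measure_ne_top ν _)).2 hν
  have hreal : (ν.real B : 𝕜) ≠ 0 := by
    exact_mod_cast (measureReal_ne_zero_iff (measure_ne_top ν _)).2
      fun h => hν (measure_mono_null hB'.ssubset.subset h)
  let e' : Lp 𝕜 2 ν := indicatorConstLp 2 hmeas' (measure_ne_top ν B') 1
  let e : Lp 𝕜 2 ν := indicatorConstLp 2 hB.measurableSet (measure_ne_top ν B) 1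
  have he' : e' ∈ subballSpace 𝕜 ν B :=
    indicatorConstLp_mem_subballSpace hmeas' hB'.ssubset.subset (fun C hC =>
      (eq_or_ne C B').imp (fun h => h.subset) (hC.disjoint hB')) 1
  have hmem : (ν.real B' : 𝕜)⁻¹ • e' - (ν.real B : 𝕜)⁻¹ • e ∈ waveletSpace 𝕜 ν B := by
    refine ⟨sub_mem (Submodule.smul_mem _ _ he') (Submodule.smul_mem _ _
      (indicatorConstLp_self_mem_subballSpace hB 1)),
      Submodule.mem_orthogonal_singleton_iff_inner_right.2 ?_⟩
    simp only [e, e', inner_sub_right, inner_smul_right, inner_const_one_indicatorConstLp_one,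
      inv_mul_cancel₀ hreal, inv_mul_cancel₀ hreal', sub_self]
  have horth := (Submodule.mem_orthogonal _ f).1 hf _ hmem
  simpa [e, e', inner_sub_left, inner_smul_left, L2.inner_indicatorConstLp_one, setAverage_eq,
    RCLike.real_smul_eq_coe_mul, sub_eq_zero] using horth

theorem ae_eq_average_of_forall_mem_orthogonal_waveletSpace [TopologicalSpace.SeparableSpace X]
    (hcov : MaxSubballsCover X)
    (hf : ∀ B, IsClosedBall B → 0 < ediam B → f ∈ (waveletSpace 𝕜 ν B)ᗮ) :
    f =ᵐ[ν] fun _ => ⨍ x, f x ∂ν := by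
  refine ae_eq_average_of_forall_isMaxSubball hcov ((Lp.memLp f).integrable one_le_two)
    fun B B' hB hB' hν => ?_
  obtain ⟨x, hx⟩ := hB'.isClosedBall.nonempty
  obtain ⟨y, hyB, hyB'⟩ := Set.exists_of_ssubset hB'.ssubset
  have hpos : 0 < ediam B :=
    ediam_pos_iff.2 ⟨x, hB'.ssubset.subset hx, y, hyB, ne_of_mem_of_not_mem hx hyB'⟩
  exact setAverage_eq_of_mem_orthogonal_waveletSpace hB hB' hν (hf B hB hpos)

theorem eq_zero_of_forall_mem_orthogonal_waveletSpace [TopologicalSpace.SeparableSpace X]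
    (hcov : MaxSubballsCover X)
    (hf : ∀ B, IsClosedBall B → 0 < ediam B → f ∈ (waveletSpace 𝕜 ν B)ᗮ) {c : 𝕜} (hc : c ≠ 0)
    (hcf : ⟪Lp.const 2 ν c, f⟫_𝕜 = 0) : f = 0 := by
  rw [← indicatorConstLp_univ, L2.inner_indicatorConstLp_eq_inner_setIntegral, setIntegral_univ,
    RCLike.inner_apply, mul_eq_zero, map_eq_zero, or_iff_left hc] at hcf
  refine Lp.eq_zero_iff_ae_eq_zero.2 ?_
  filter_upwards [ae_eq_average_of_forall_mem_orthogonal_waveletSpace hcov hf] with x hx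
  rw [hx, average_eq, hcf, smul_zero, Pi.zero_apply]

end WaveletSpace

theorem norm_const_inv_sqrt_measureReal_univ (𝕜 : Type*) [RCLike 𝕜] {α : Type*}
    [MeasurableSpace α] (μ : Measure α) [IsFiniteMeasure μ] [NeZero μ] :
    ‖Lp.const 2 μ (√(μ.real Set.univ) : 𝕜)⁻¹‖ = 1 := by
  have hpos : 0 < √(μ.real Set.univ) := Real.sqrt_pos.2 measureReal_univ_pos
  rw [Lp.norm_const _ _ _ two_ne_zero, norm_inv, RCLike.norm_ofReal, abs_of_pos hpos,
    ENNReal.toReal_ofNat, ← Real.sqrt_eq_rpow, inv_mul_cancel₀ hpos.ne']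

theorem ultrametric_wavelets_orthonormal_basis_finite_measure_general {𝕜 X : Type*} [RCLike 𝕜]
    [MetricSpace X] [IsUltrametricDist X] [TopologicalSpace.SeparableSpace X] [MeasurableSpace X]
    [BorelSpace X] (ν : Measure X) [IsFiniteMeasure ν] [NeZero ν] (hcov : MaxSubballsCover X)
    {ι : {B : Set X // IsClosedBall B ∧ 0 < ediam B} → Type*} (ψ : (Σ B, ι B) → Lp 𝕜 2 ν)
    (hon : ∀ B, Orthonormal 𝕜 fun j => ψ ⟨B, j⟩)
    (hspan : ∀ B, (Submodule.span 𝕜 (Set.range fun j => ψ ⟨B, j⟩)).topologicalClosure =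
      waveletSpace 𝕜 ν B)
    (ψ₀ : Lp 𝕜 2 ν) (hψ₀ : ψ₀ =ᵐ[ν] fun _ => (√(ν.real Set.univ) : 𝕜)⁻¹) :
    Orthonormal 𝕜 (fun o => Option.elim o ψ₀ ψ) ∧
    (Submodule.span 𝕜 (Set.range (fun o => Option.elim o ψ₀ ψ))).topologicalClosure = ⊤ := by
  obtain rfl : ψ₀ = Lp.const 2 ν (√(ν.real Set.univ) : 𝕜)⁻¹ :=
    Lp.ext (hψ₀.trans (Lp.coeFn_const 2 ν _).symm)
  have hmem (i) : ψ i ∈ waveletSpace 𝕜 ν i.1 :=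
    hspan i.1 ▸ Submodule.le_topologicalClosure _ (Submodule.subset_span ⟨i.2, rfl⟩)
  have hψ : Orthonormal 𝕜 ψ := by
    refine (OrthogonalFamily.of_pairwise (V := fun B : {B : Set X // _} => waveletSpace 𝕜 ν B)
      fun B C hne => waveletSpace_isOrtho hcov B.2.1 C.2.1
        (Subtype.coe_ne_coe.2 hne)).orthonormal_sigma_orthonormal
      (v_family := fun B j => ⟨ψ ⟨B, j⟩, hmem ⟨B, j⟩⟩) fun B => ?_
    exact (waveletSpace 𝕜 ν B).subtypeₗᵢ.orthonormal_comp_iff.1 (hon B)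
  refine ⟨orthonormal_option_elim (norm_const_inv_sqrt_measureReal_univ 𝕜 ν) hψ fun i =>
    inner_eq_zero_of_mem_waveletSpace (fun _ _ _ _ => rfl) (Lp.coeFn_const 2 ν _) (hmem i), ?_⟩
  rw [Submodule.topologicalClosure_eq_top_iff, Submodule.eq_bot_iff]
  intro f hf
  refine eq_zero_of_forall_mem_orthogonal_waveletSpace hcov (fun B hB hpos => ?_)
    (inv_ne_zero (by simp [measureReal_univ_pos.ne']))
    ((Submodule.mem_orthogonal _ f).1 hf _ (Submodule.subset_span ⟨none, rfl⟩))
  rw [← hspan ⟨B, hB, hpos⟩, Submodule.orthogonal_closure]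
  refine Submodule.orthogonal_le (Submodule.span_mono ?_) hf
  exact Set.range_subset_iff.2 fun j => ⟨some ⟨_, j⟩, rfl⟩

/-- The basis of ultrametric wavelets, case of finite total measure `A = ν(X) < ∞`:
the wavelet family `{ψ_{I,j}}` together with the constant function `A^{-1/2}` is an
orthonormal Hilbert basis of `L²(X,ν)`. -/
theorem ultrametric_wavelets_orthonormal_basis_finite_measure {X : Type*} [MetricSpace X]
    [IsUltrametricDist X] [CompleteSpace X] [TopologicalSpace.SeparableSpace X]
    [MeasurableSpace X] [BorelSpace X] (ν : Measure X)
    (hstruct : ∀ B : Set X, IsClosedBall B → 0 < EMetric.diam B →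
      {B' : Set X | IsMaxSubball B' B}.Finite ∧ B = ⋃₀ {B' : Set X | IsMaxSubball B' B})
    (hdiam : ∀ B : ℕ → Set X, (∀ n, IsClosedBall (B n)) → (∀ n, B (n + 1) ⊂ B n) →
      Filter.Tendsto (fun n => EMetric.diam (B n)) Filter.atTop (nhds 0))
    (hνball : ∀ B : Set X, IsClosedBall B → 0 < EMetric.diam B → 0 < ν B ∧ ν B < ⊤)
    (hνsub : ∀ B B' : Set X, IsClosedBall B → 0 < EMetric.diam B → IsMaxSubball B' B →
      0 < ν B' ∧ ν B' < ⊤)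
    -- `X` is the union of an increasing sequence of closed balls
    (hexh : ∃ D : ℕ → Set X, (∀ n, IsClosedBall (D n)) ∧ Monotone D ∧
      (⋃ n, D n) = Set.univ)
    -- the total measure `A = ν(X)` (the supremum of measures of balls) is finite and positive
    (hA : ν Set.univ < ⊤) (hA0 : ν Set.univ ≠ 0)
    -- `p B` is the number of maximal proper closed subballs of `B`
    (p : Set X → ℕ)
    (hp : ∀ B : Set X, IsClosedBall B → 0 < EMetric.diam B →
      2 ≤ p B ∧ Nat.card {B' : Set X | IsMaxSubball B' B} = p B)
    -- the wavelet family, indexed by balls `I` of positive diameter and `1 ≤ j ≤ p_I - 1`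
    (ψ : (Σ B : {B : Set X // IsClosedBall B ∧ 0 < EMetric.diam B}, Fin (p B.1 - 1)) →
      Lp ℂ 2 ν)
    -- each `ψ_{I,j}` is (a.e.) a linear combination of indicators of the maximal
    -- subballs of `I` with zero mean
    (hform : ∀ i, ∃ g : X → ℂ, (∀ x ∉ i.1.1, g x = 0) ∧
      (∀ B' : Set X, IsMaxSubball B' i.1.1 → ∀ x ∈ B', ∀ y ∈ B', g x = g y) ∧
      (∫ x, g x ∂ν = 0) ∧ (ψ i : X → ℂ) =ᵐ[ν] g)
    -- for each ball `I`, the family `(ψ_{I,j})_j` is orthonormal (hence an orthonormal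
    -- basis of the `(p_I - 1)`-dimensional zero-mean space)
    (hon : ∀ B : {B : Set X // IsClosedBall B ∧ 0 < EMetric.diam B},
      Orthonormal ℂ (fun j : Fin (p B.1 - 1) => ψ ⟨B, j⟩))
    -- `ψ₀` is the constant function `A^{-1/2}`
    (ψ₀ : Lp ℂ 2 ν)
    (hψ₀ : (ψ₀ : X → ℂ) =ᵐ[ν] fun _ => ((Real.sqrt (ν Set.univ).toReal)⁻¹ : ℂ)) :
    Orthonormal ℂ (fun o => Option.elim o ψ₀ ψ) ∧
    (Submodule.span ℂ (Set.range (fun o => Option.elim o ψ₀ ψ))).topologicalClosure = ⊤ := by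
  have : IsFiniteMeasure ν := ⟨hA⟩
  have : NeZero ν := ⟨fun h => hA0 (by simp [h])⟩
  refine ultrametric_wavelets_orthonormal_basis_finite_measure_general ν
    (fun B hB hpos => (hstruct B hB hpos).2) ψ hon (fun ⟨B, hB, hpos⟩ => ?_) ψ₀ hψ₀
  have := (hstruct B hB hpos).1.to_subtype
  refine topologicalClosure_span_eq_waveletSpace hB (hstruct B hB hpos).2 (hνball B hB hpos).1.ne'
    ?_ (hon _) fun j => mem_waveletSpace_iff.2 (hform ⟨_, j⟩)
  rw [(hp B hB hpos).2, Fintype.card_fin]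
  exact Nat.le_succ_of_pred_le le_rfl
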